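/- arXiv:2006.10580 — 2 statements merged into one kernel-verified Lean document; each statement's English description precedes it below -/
import Mathlib

section
/- Let M = (M_k) be a nondecreasing logarithmically convex sequence of positive real numbers with M_0 = 1, let E : [0,∞) → [0,1) be an increasing continuous function with E(0) = 0 and lim_{r→0⁺} E(r)/r = ∞, set ρ_n := M_n/M_{n+1} and q_n := E(ρ_n)/ρ_n, and let Λ be an unbounded set of positive even integers with q_λ > 1 for all λ ∈ Λ. Then the function F_Γ(x) := Σ_{λ∈Λ} f_{q_λ,ρ_λ}(x)/(φ(ρ_λ^{−1})·2^λ) is C^∞ on ℝ² and satisfies |∂^α F_Γ(x)| ≤ 8^{|α|+3}·α!·M_{|α|}² for every x ∈ ℝ² and every multi-index α ∈ ℕ²; in particular F_Γ ∈ C_{M²}(ℝ²). -/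
/-!
The series is differentiated term by term, and each term is bounded in two independent factors.

* For the kernel `cauchyKer x = 1 / (x₁² + x₂² + 1)` one has
  `|∂^α cauchyKer| ≤ 3^|α| α!` on all of `ℝ²` (`ker_bound`). Applying `∂^α` to
  `(x₁² + x₂² + 1) * cauchyKer = 1` gives a recursion expressing
  `∂^α cauchyKer` through lower derivatives (`leib_eq_zero`), and the bound follows by induction.
* Let `m_j = M (j+1) / M j`. The definition of the Ostrowski function `φ` as a supremum, which is
  finite at `m_j` by log-convexity, gives `m_j ^ (n+2) / φ(m_j) ≤ M n` for all `n`
  (`pow_div_ostrowski_le`).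

In the base function, rescaling the second variable by `m_k` costs `m_k ^ α₂`, which together with
the weight `m_k² / φ(m_k)` is at most `M α₂`; summing the factors `2^{-k}` yields
`|∂^α h| ≤ 3^|α| α! M α₂` (`baseH_bound`). In `F_Γ`, rescaling by `1/ρ_l = m_l` costs `m_l ^ |α|`,
which divided by `φ(m_l)` is at most `M |α|`. Since `M` is nondecreasing this gives
`|∂^α F_Γ| ≤ 2 * 3^|α| α! (M |α|)²` (`FGamma_bound`), better than claimed. The bounds are summable
and uniform in `x` for each `α`, which justifies smoothness and termwise differentiation
(`tsum_bound`).
-/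

open Real Filter Topology
open scoped Classical
noncomputable section
def pd1 (f : ℝ × ℝ → ℝ) : ℝ × ℝ → ℝ := fun x => fderiv ℝ f x (1, 0)
def pd2 (f : ℝ × ℝ → ℝ) : ℝ × ℝ → ℝ := fun x => fderiv ℝ f x (0, 1)
def pd (α : ℕ × ℕ) (f : ℝ × ℝ → ℝ) : ℝ × ℝ → ℝ := pd1^[α.1] (pd2^[α.2] f)
def LogConvexSeq (M : ℕ → ℝ) : Prop := Monotone (fun k => M (k + 1) / M k)
def MemDC (M : ℕ → ℝ) (f : ℝ × ℝ → ℝ) : Prop :=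
  ContDiff ℝ (⊤ : ℕ∞) f ∧
  ∀ K : Set (ℝ × ℝ), IsCompact K →
    ∃ A > (0:ℝ), ∃ B > (0:ℝ), ∀ x ∈ K, ∀ α : ℕ × ℕ,
      |pd α f x| ≤ A * B ^ (α.1 + α.2) * (Nat.factorial α.1 * Nat.factorial α.2) * M (α.1 + α.2)
def blowup : ℝ × ℝ → ℝ × ℝ := fun p => (p.1 * Real.cos p.2, p.1 * Real.sin p.2)
def ostrowski (M : ℕ → ℝ) (r : ℝ) : ℝ := ⨆ n : ℕ, r ^ (n + 2) / M n
def baseH (M : ℕ → ℝ) (x : ℝ × ℝ) : ℝ :=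
  ∑' k : ℕ,
    (M (k + 2) / M (k + 1)) ^ 2 / (2 ^ (k + 1) * ostrowski M (M (k + 2) / M (k + 1))) *
      (1 / (x.1 ^ 2 + (M (k + 2) / M (k + 1) * x.2) ^ 2 + 1))
def blockF (M : ℕ → ℝ) (q ρ : ℝ) (x : ℝ × ℝ) : ℝ := baseH M (x.1 / ρ - q, x.2 / ρ)
def rhoSeq (M : ℕ → ℝ) (n : ℕ) : ℝ := M n / M (n + 1)
def FGamma (M : ℕ → ℝ) (E : ℝ → ℝ) (Λ : Set ℕ) (x : ℝ × ℝ) : ℝ :=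
  ∑' l : ℕ, Set.indicator Λ
    (fun l => blockF M (E (rhoSeq M l) / rhoSeq M l) (rhoSeq M l) x /
      (ostrowski M (rhoSeq M l)⁻¹ * 2 ^ l)) l

/-! ### Partial derivatives of smooth functions -/

lemma pd1_smooth {f : ℝ × ℝ → ℝ} (hf : ContDiff ℝ (⊤ : ℕ∞) f) :
    ContDiff ℝ (⊤ : ℕ∞) (pd1 f) :=
  (hf.fderiv_right (m := (⊤ : ℕ∞)) (by simp)).clm_apply contDiff_const

lemma pd2_smooth {f : ℝ × ℝ → ℝ} (hf : ContDiff ℝ (⊤ : ℕ∞) f) :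
    ContDiff ℝ (⊤ : ℕ∞) (pd2 f) :=
  (hf.fderiv_right (m := (⊤ : ℕ∞)) (by simp)).clm_apply contDiff_const

lemma pd_zero (f : ℝ × ℝ → ℝ) : pd (0, 0) f = f := rfl

lemma pd1_pd (a b : ℕ) (f : ℝ × ℝ → ℝ) : pd1 (pd (a, b) f) = pd (a + 1, b) f := by
  simp only [pd, Function.iterate_succ_apply']

lemma pd2_pd (b : ℕ) (f : ℝ × ℝ → ℝ) : pd2 (pd (0, b) f) = pd (0, b + 1) f := by
  simp only [pd, Function.iterate_succ_apply', Function.iterate_zero, id]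

lemma pd_smooth {f : ℝ × ℝ → ℝ} (hf : ContDiff ℝ (⊤ : ℕ∞) f) (a b : ℕ) :
    ContDiff ℝ (⊤ : ℕ∞) (pd (a, b) f) := by
  induction a with
  | zero =>
    induction b with
    | zero => exact hf
    | succ b ih => rw [← pd2_pd]; exact pd2_smooth ih
  | succ a ih => rw [← pd1_pd]; exact pd1_smooth ih

lemma smooth_diff {f : ℝ × ℝ → ℝ} (hf : ContDiff ℝ (⊤ : ℕ∞) f) : Differentiable ℝ f :=
  hf.differentiable (by simp)

lemma pd1_pd2_comm {f : ℝ × ℝ → ℝ} (hf : ContDiff ℝ (⊤ : ℕ∞) f) :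
    pd2 (pd1 f) = pd1 (pd2 f) := by
  funext x
  have hd : DifferentiableAt ℝ (fderiv ℝ f) x :=
    (hf.fderiv_right (m := (⊤ : ℕ∞)) (by simp)).differentiable (by simp) x
  have hs : IsSymmSndFDerivAt ℝ f x := by
    apply hf.contDiffAt.isSymmSndFDerivAt
    simp only [minSmoothness_of_isRCLikeNormedField]
    exact WithTop.coe_le_coe.2 (le_top : (2 : ℕ∞) ≤ ⊤)
  have key : ∀ v w : ℝ × ℝ,
      fderiv ℝ (fun y => fderiv ℝ f y v) x w = fderiv ℝ (fderiv ℝ f) x w v := by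
    intro v w
    rw [fderiv_clm_apply hd (differentiableAt_const v)]
    simp
  change fderiv ℝ (fun y => fderiv ℝ f y (1, 0)) x (0, 1)
    = fderiv ℝ (fun y => fderiv ℝ f y (0, 1)) x (1, 0)
  rw [key, key]
  exact hs _ _

lemma pd_pd1 {f : ℝ × ℝ → ℝ} (hf : ContDiff ℝ (⊤ : ℕ∞) f) (a b : ℕ) :
    pd (a, b) (pd1 f) = pd (a + 1, b) f := by
  induction a with
  | zero =>
    induction b with
    | zero => rfl
    | succ b ih =>
      rw [← pd2_pd, ih, ← pd1_pd, ← pd1_pd, pd1_pd2_comm (pd_smooth hf 0 b), pd2_pd]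
  | succ a ih => rw [← pd1_pd, ih, pd1_pd]

lemma pd_pd2 (f : ℝ × ℝ → ℝ) (a b : ℕ) :
    pd (a, b) (pd2 f) = pd (a, b + 1) f := by
  simp only [pd, Function.iterate_succ_apply]

lemma fderiv_eq_pd (f : ℝ × ℝ → ℝ) (x : ℝ × ℝ) :
    fderiv ℝ f x = pd1 f x • ContinuousLinearMap.fst ℝ ℝ ℝ
      + pd2 f x • ContinuousLinearMap.snd ℝ ℝ ℝ := by
  ext <;> simp [pd1, pd2]

lemma norm_fderiv_le (f : ℝ × ℝ → ℝ) (x : ℝ × ℝ) :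
    ‖fderiv ℝ f x‖ ≤ |pd1 f x| + |pd2 f x| := by
  rw [fderiv_eq_pd]
  refine (norm_add_le _ _).trans ?_
  rw [norm_smul, norm_smul, Real.norm_eq_abs, Real.norm_eq_abs]
  have h1 := ContinuousLinearMap.norm_fst_le ℝ ℝ ℝ
  have h2 := ContinuousLinearMap.norm_snd_le ℝ ℝ ℝ
  exact add_le_add (mul_le_of_le_one_right (abs_nonneg _) h1)
    (mul_le_of_le_one_right (abs_nonneg _) h2)

/-! ### Termwise differentiation of series -/

/-- A sequence of smooth functions such that, for each multi-index `α`, the `α`-th partial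
derivatives are dominated uniformly on `ℝ²` by a summable sequence. -/
def DomSeries (f : ℕ → ℝ × ℝ → ℝ) : Prop :=
  (∀ i, ContDiff ℝ (⊤ : ℕ∞) (f i)) ∧
    ∀ a b : ℕ, ∃ u : ℕ → ℝ, Summable u ∧ ∀ i x, |pd (a, b) (f i) x| ≤ u i

lemma DomSeries.partial_fst {f : ℕ → ℝ × ℝ → ℝ} (hf : DomSeries f) :
    DomSeries (fun i => pd1 (f i)) := by
  refine ⟨fun i => pd1_smooth (hf.1 i), fun a b => ?_⟩
  obtain ⟨u, hu, h⟩ := hf.2 (a + 1) b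
  exact ⟨u, hu, fun i x => by rw [pd_pd1 (hf.1 i)]; exact h i x⟩

lemma DomSeries.partial_snd {f : ℕ → ℝ × ℝ → ℝ} (hf : DomSeries f) :
    DomSeries (fun i => pd2 (f i)) := by
  refine ⟨fun i => pd2_smooth (hf.1 i), fun a b => ?_⟩
  obtain ⟨u, hu, h⟩ := hf.2 a (b + 1)
  exact ⟨u, hu, fun i x => by rw [pd_pd2]; exact h i x⟩

lemma DomSeries.summable {f : ℕ → ℝ × ℝ → ℝ} (hf : DomSeries f) (x : ℝ × ℝ) :
    Summable (fun i => f i x) := by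
  obtain ⟨u, hu, h⟩ := hf.2 0 0
  exact Summable.of_norm_bounded hu (fun i => h i x)

lemma DomSeries.hasFDerivAt {f : ℕ → ℝ × ℝ → ℝ} (hf : DomSeries f) (x : ℝ × ℝ) :
    HasFDerivAt (fun y => ∑' i, f i y)
      ((∑' i, pd1 (f i) x) • ContinuousLinearMap.fst ℝ ℝ ℝ
        + (∑' i, pd2 (f i) x) • ContinuousLinearMap.snd ℝ ℝ ℝ) x := by
  obtain ⟨u, hu, h1⟩ := hf.2 1 0
  obtain ⟨v, hv, h2⟩ := hf.2 0 1
  have hb : ∀ i x, ‖fderiv ℝ (f i) x‖ ≤ u i + v i := fun i x =>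
    (norm_fderiv_le (f i) x).trans (add_le_add (h1 i x) (h2 i x))
  have hd := hasFDerivAt_tsum (hu.add hv)
    (fun i x => ((smooth_diff (hf.1 i)) x).hasFDerivAt) hb (hf.summable 0) x
  rw [tsum_congr (fun i => fderiv_eq_pd (f i) x), Summable.tsum_add, Summable.tsum_smul_const,
    Summable.tsum_smul_const] at hd
  · exact hd
  · exact hf.partial_snd.summable x
  · exact hf.partial_fst.summable x
  · exact (hf.partial_fst.summable x).smul_const _
  · exact (hf.partial_snd.summable x).smul_const _

lemma DomSeries.pd1_tsum {f : ℕ → ℝ × ℝ → ℝ} (hf : DomSeries f) :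
    pd1 (fun y => ∑' i, f i y) = fun x => ∑' i, pd1 (f i) x := by
  funext x
  change fderiv ℝ _ x (1, 0) = _
  rw [(hf.hasFDerivAt x).fderiv]
  simp

lemma DomSeries.pd2_tsum {f : ℕ → ℝ × ℝ → ℝ} (hf : DomSeries f) :
    pd2 (fun y => ∑' i, f i y) = fun x => ∑' i, pd2 (f i) x := by
  funext x
  change fderiv ℝ _ x (0, 1) = _
  rw [(hf.hasFDerivAt x).fderiv]
  simp

/-- Induction on the order: the differential of the sum has the sums of the dominated series
`pd1 (f i)` and `pd2 (f i)` as its coefficients. -/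
lemma DomSeries.contDiff_nat (n : ℕ) : ∀ {f : ℕ → ℝ × ℝ → ℝ}, DomSeries f →
    ContDiff ℝ n (fun y => ∑' i, f i y) := by
  induction n with
  | zero =>
    intro f hf
    have : Differentiable ℝ (fun y => ∑' i, f i y) :=
      fun x => (hf.hasFDerivAt x).differentiableAt
    exact contDiff_zero.2 this.continuous
  | succ n ih =>
    intro f hf
    have h := (contDiff_succ_iff_hasFDerivAt (𝕜 := ℝ) (n := n)
      (f := fun y => ∑' i, f i y)).2 ⟨_, ?_, hf.hasFDerivAt⟩
    · exact_mod_cast h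
    · exact ((ih hf.partial_fst).smul contDiff_const).add ((ih hf.partial_snd).smul contDiff_const)

lemma DomSeries.contDiff {f : ℕ → ℝ × ℝ → ℝ} (hf : DomSeries f) :
    ContDiff ℝ (⊤ : ℕ∞) (fun y => ∑' i, f i y) :=
  contDiff_infty.2 fun n => DomSeries.contDiff_nat n hf

lemma DomSeries.pd_tsum {f : ℕ → ℝ × ℝ → ℝ} (hf : DomSeries f) (a b : ℕ) :
    DomSeries (fun i => pd (a, b) (f i)) ∧
      pd (a, b) (fun y => ∑' i, f i y) = fun x => ∑' i, pd (a, b) (f i) x := by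
  induction a with
  | zero =>
    induction b with
    | zero => exact ⟨hf, rfl⟩
    | succ b ih =>
      refine ⟨?_, ?_⟩
      · simpa only [pd2_pd] using ih.1.partial_snd
      · rw [← pd2_pd, ih.2, ih.1.pd2_tsum]
        simp only [pd2_pd]
  | succ a ih =>
    refine ⟨?_, ?_⟩
    · simpa only [pd1_pd] using ih.1.partial_fst
    · rw [← pd1_pd, ih.2, ih.1.pd1_tsum]
      simp only [pd1_pd]

/-- Domination by fixed summable weights `w i`, up to a constant `C a b` depending only on the
multi-index, gives smoothness of the sum and the bound `C a b * s`, where `s = ∑ w i`. -/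
lemma tsum_bound {f : ℕ → ℝ × ℝ → ℝ} (hs : ∀ i, ContDiff ℝ (⊤ : ℕ∞) (f i))
    (C : ℕ → ℕ → ℝ) {w : ℕ → ℝ} {s : ℝ} (hw : HasSum w s)
    (hb : ∀ a b i x, |pd (a, b) (f i) x| ≤ C a b * w i) :
    ContDiff ℝ (⊤ : ℕ∞) (fun y => ∑' i, f i y) ∧
      ∀ a b x, |pd (a, b) (fun y => ∑' i, f i y) x| ≤ C a b * s := by
  have hd : DomSeries f := ⟨hs, fun a b => ⟨_, hw.summable.mul_left (C a b), hb a b⟩⟩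
  refine ⟨hd.contDiff, fun a b x => ?_⟩
  rw [(hd.pd_tsum a b).2]
  exact tsum_of_norm_bounded (hw.mul_left (C a b)) (f := fun i => pd (a, b) (f i) x)
    (fun i => hb a b i x)

/-! ### Affine changes of variables -/

lemma affine_smooth {f : ℝ × ℝ → ℝ} (hf : ContDiff ℝ (⊤ : ℕ∞) f) (d a b c : ℝ) :
    ContDiff ℝ (⊤ : ℕ∞) (fun x : ℝ × ℝ => d * f (a * x.1 - c, b * x.2)) := by
  refine contDiff_const.mul (hf.comp ?_)
  fun_prop

lemma affine_hasFDerivAt (a b c : ℝ) (x : ℝ × ℝ) :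
    HasFDerivAt (fun x : ℝ × ℝ => (a * x.1 - c, b * x.2))
      ((a • ContinuousLinearMap.fst ℝ ℝ ℝ).prod (b • ContinuousLinearMap.snd ℝ ℝ ℝ)) x := by
  refine HasFDerivAt.prodMk ?_ ?_
  · exact ((hasFDerivAt_fst (p := x)).const_mul a).sub_const c
  · exact (hasFDerivAt_snd (p := x)).const_mul b

lemma affine_fderiv {f : ℝ × ℝ → ℝ} (hf : ContDiff ℝ (⊤ : ℕ∞) f) (d a b c : ℝ) (x v : ℝ × ℝ) :
    fderiv ℝ (fun x : ℝ × ℝ => d * f (a * x.1 - c, b * x.2)) x v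
      = d * fderiv ℝ f (a * x.1 - c, b * x.2) (a * v.1, b * v.2) := by
  have h := ((smooth_diff hf (a * x.1 - c, b * x.2)).hasFDerivAt.comp x
    (affine_hasFDerivAt a b c x)).const_mul d
  have h2 := h.fderiv
  simp only [Function.comp_def] at h2
  rw [h2]
  simp

lemma affine_pd1 {f : ℝ × ℝ → ℝ} (hf : ContDiff ℝ (⊤ : ℕ∞) f) (d a b c : ℝ) :
    pd1 (fun x : ℝ × ℝ => d * f (a * x.1 - c, b * x.2))
      = fun x => (d * a) * pd1 f (a * x.1 - c, b * x.2) := by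
  funext x
  simp only [pd1]
  rw [affine_fderiv hf]
  have : ((a * 1, b * 0) : ℝ × ℝ) = a • ((1, 0) : ℝ × ℝ) := by simp
  rw [this, map_smul, smul_eq_mul, mul_assoc]

lemma affine_pd2 {f : ℝ × ℝ → ℝ} (hf : ContDiff ℝ (⊤ : ℕ∞) f) (d a b c : ℝ) :
    pd2 (fun x : ℝ × ℝ => d * f (a * x.1 - c, b * x.2))
      = fun x => (d * b) * pd2 f (a * x.1 - c, b * x.2) := by
  funext x
  simp only [pd2]
  rw [affine_fderiv hf]
  have : ((a * 0, b * 1) : ℝ × ℝ) = b • ((0, 1) : ℝ × ℝ) := by simp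
  rw [this, map_smul, smul_eq_mul, mul_assoc]

lemma affine_pd {f : ℝ × ℝ → ℝ} (hf : ContDiff ℝ (⊤ : ℕ∞) f) (d a b c : ℝ) (i j : ℕ) :
    pd (i, j) (fun x : ℝ × ℝ => d * f (a * x.1 - c, b * x.2))
      = fun x => (d * a ^ i * b ^ j) * pd (i, j) f (a * x.1 - c, b * x.2) := by
  induction i with
  | zero =>
    induction j with
    | zero => simp [pd_zero]
    | succ j ih =>
      rw [← pd2_pd, ih, affine_pd2 (pd_smooth hf 0 j), pd2_pd]
      funext x
      ring
  | succ i ih =>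
    rw [← pd1_pd, ih, affine_pd1 (pd_smooth hf i j), pd1_pd]
    funext x
    ring

/-! ### The kernel `1 / (x₁² + x₂² + 1)` -/

/-- The rational kernel `1 / (x₁² + x₂² + 1)` whose rescalings build the base function. -/
def cauchyKer (x : ℝ × ℝ) : ℝ := 1 / (x.1 ^ 2 + x.2 ^ 2 + 1)

lemma ker_smooth : ContDiff ℝ (⊤ : ℕ∞) cauchyKer := by
  unfold cauchyKer
  refine contDiff_const.div (by fun_prop) (fun x => by positivity)

/-- The Leibniz expansion of `∂^(a,b)` applied to `(x₁² + x₂² + 1) * cauchyKer`. The truncated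
subtractions are harmless, since the corresponding coefficients vanish. -/
def leib (a b : ℕ) (x : ℝ × ℝ) : ℝ :=
  (x.1 ^ 2 + x.2 ^ 2 + 1) * pd (a, b) cauchyKer x
    + (2 * a * x.1 * pd (a - 1, b) cauchyKer x + a * (a - 1) * pd (a - 2, b) cauchyKer x)
    + (2 * b * x.2 * pd (a, b - 1) cauchyKer x + b * (b - 1) * pd (a, b - 2) cauchyKer x)

lemma pd_hasFDerivAt (a b : ℕ) (x : ℝ × ℝ) :
    HasFDerivAt (pd (a, b) cauchyKer) (fderiv ℝ (pd (a, b) cauchyKer) x) x :=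
  (smooth_diff (pd_smooth ker_smooth a b) x).hasFDerivAt

lemma leib_fderiv (a b : ℕ) (x v : ℝ × ℝ) :
    fderiv ℝ (leib a b) x v =
      (2 * x.1 * v.1 + 2 * x.2 * v.2) * pd (a, b) cauchyKer x
      + (x.1 ^ 2 + x.2 ^ 2 + 1) * fderiv ℝ (pd (a, b) cauchyKer) x v
      + (2 * a * v.1 * pd (a - 1, b) cauchyKer x + 2 * a * x.1 * fderiv ℝ (pd (a - 1, b) cauchyKer) x v
        + a * (a - 1) * fderiv ℝ (pd (a - 2, b) cauchyKer) x v)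
      + (2 * b * v.2 * pd (a, b - 1) cauchyKer x + 2 * b * x.2 * fderiv ℝ (pd (a, b - 1) cauchyKer) x v
        + b * (b - 1) * fderiv ℝ (pd (a, b - 2) cauchyKer) x v) := by
  have hx := hasFDerivAt_fst (𝕜 := ℝ) (p := x)
  have hy := hasFDerivAt_snd (𝕜 := ℝ) (p := x)
  have h := (((((hx.pow 2).add (hy.pow 2)).add_const 1).mul (pd_hasFDerivAt a b x)).add
    (((hx.const_mul (2 * (a : ℝ))).mul (pd_hasFDerivAt (a - 1) b x)).add
      ((pd_hasFDerivAt (a - 2) b x).const_mul ((a : ℝ) * (a - 1))))).add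
    (((hy.const_mul (2 * (b : ℝ))).mul (pd_hasFDerivAt a (b - 1) x)).add
      ((pd_hasFDerivAt a (b - 2) x).const_mul ((b : ℝ) * (b - 1))))
  have h2 : HasFDerivAt (leib a b) _ x := h
  rw [h2.fderiv]
  simp
  ring

lemma leib_pd1 (a b : ℕ) : pd1 (leib a b) = leib (a + 1) b := by
  funext x
  have e : ∀ i j, fderiv ℝ (pd (i, j) cauchyKer) x (1, 0) = pd (i + 1, j) cauchyKer x := fun i j => by
    rw [← pd1_pd]; rfl
  change fderiv ℝ (leib a b) x (1, 0) = _
  rw [leib_fderiv]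
  simp only [e, leib]
  rcases a with _ | _ | a
  · simp; ring
  · simp; ring
  · simp only [Nat.add_sub_cancel, show a + 1 + 1 - 1 = a + 1 by omega,
      show a + 1 + 1 - 2 = a by omega, show a + 1 + 1 + 1 - 2 = a + 1 by omega]
    push_cast
    ring

lemma leib_pd2 (b : ℕ) : pd2 (leib 0 b) = leib 0 (b + 1) := by
  funext x
  have e : ∀ j, fderiv ℝ (pd (0, j) cauchyKer) x (0, 1) = pd (0, j + 1) cauchyKer x := fun j => by
    rw [← pd2_pd]; rfl
  change fderiv ℝ (leib 0 b) x (0, 1) = _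
  rw [leib_fderiv]
  simp only [e, leib, Nat.zero_sub]
  rcases b with _ | _ | b
  · simp; ring
  · simp; ring
  · simp only [Nat.add_sub_cancel, show b + 1 + 1 - 1 = b + 1 by omega,
      show b + 1 + 1 - 2 = b by omega, show b + 1 + 1 + 1 - 2 = b + 1 by omega]
    push_cast
    ring

lemma leib_zero : leib 0 0 = fun _ => 1 := by
  funext x
  have : x.1 ^ 2 + x.2 ^ 2 + 1 ≠ 0 := by positivity
  simp [leib, pd_zero, cauchyKer, this]

lemma leib_eq_zero (a b : ℕ) (h : 0 < a + b) : leib a b = fun _ => 0 := by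
  have hconst : ∀ b, ∃ c, leib 0 b = fun _ => c := by
    intro b
    induction b with
    | zero => exact ⟨1, leib_zero⟩
    | succ b ih =>
      obtain ⟨c, hc⟩ := ih
      exact ⟨0, by rw [← leib_pd2, hc]; funext x; simp [pd2]⟩
  have hconst' : ∃ c, ∀ a', a = a' + 1 → leib a' b = fun _ => c := by
    rcases a with _ | a
    · exact ⟨0, fun a' h => by omega⟩
    · have : ∃ c, leib a b = fun _ => c := by
        clear h
        induction a with
        | zero => exact hconst b
        | succ a ih =>
          obtain ⟨c, hc⟩ := ih
          exact ⟨0, by rw [← leib_pd1, hc]; funext x; simp [pd1]⟩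
      obtain ⟨c, hc⟩ := this
      exact ⟨c, fun a' h => by obtain rfl : a = a' := by omega
                               exact hc⟩
  rcases a with _ | a
  · rcases b with _ | b
    · omega
    · obtain ⟨c, hc⟩ := hconst b
      rw [← leib_pd2, hc]; funext x; simp [pd2]
  · obtain ⟨c, hc⟩ := hconst'
    rw [← leib_pd1, hc a rfl]; funext x; simp [pd1]

/-- Cauchy-type estimate for the kernel. In the Leibniz identity the four lower-order terms are at
most `2|x₁|/3`, `1/9`, `2|x₂|/3`, `1/9` times the claimed bound, and these factors add up to less
than `x₁² + x₂² + 1`. -/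
lemma ker_bound (n : ℕ) : ∀ a b : ℕ, a + b = n → ∀ x : ℝ × ℝ,
    |pd (a, b) cauchyKer x| ≤ 3 ^ (a + b) * (Nat.factorial a * Nat.factorial b) := by
  induction n using Nat.strong_induction_on with
  | _ n ih =>
  intro a b hab x
  have hQ : 0 < x.1 ^ 2 + x.2 ^ 2 + 1 := by positivity
  rcases Nat.eq_zero_or_pos (a + b) with h0 | hpos
  · obtain ⟨rfl, rfl⟩ : a = 0 ∧ b = 0 := by omega
    simp only [pd_zero, cauchyKer]
    rw [abs_of_pos (by positivity)]
    simp
    apply inv_le_one_of_one_le₀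
    nlinarith [sq_nonneg x.1, sq_nonneg x.2]
  have hL : leib a b x = 0 := by rw [leib_eq_zero a b hpos]
  set T : ℝ := 3 ^ (a + b) * (Nat.factorial a * Nat.factorial b) with hT
  have hTpos : 0 < T := by positivity
  have t1 : |(a : ℝ) * pd (a - 1, b) cauchyKer x| ≤ T / 3 := by
    rcases a with _ | a
    · simp; positivity
    · have h := ih (a + b) (by omega) a b rfl x
      rw [abs_mul, Nat.abs_cast, Nat.add_sub_cancel]
      calc ((a + 1 : ℕ) : ℝ) * |pd (a, b) cauchyKer x|
          ≤ ((a + 1 : ℕ) : ℝ) * (3 ^ (a + b) * (Nat.factorial a * Nat.factorial b)) := by gcongr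
        _ = T / 3 := by
          rw [hT, Nat.factorial_succ, show a + 1 + b = a + b + 1 by ring]; push_cast; ring
  have t2 : |(a : ℝ) * (a - 1) * pd (a - 2, b) cauchyKer x| ≤ T / 9 := by
    rcases a with _ | _ | a
    · simp; positivity
    · simp; positivity
    · have h := ih (a + b) (by omega) a b rfl x
      have e : (((a + 1 + 1 : ℕ) : ℝ) * (((a + 1 + 1 : ℕ) : ℝ) - 1)) = ((a : ℝ) + 2) * (a + 1) := by
        push_cast; ring
      rw [abs_mul, e, abs_of_nonneg (by positivity : (0 : ℝ) ≤ ((a : ℝ) + 2) * (a + 1)),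
        show a + 1 + 1 - 2 = a by omega]
      calc ((a : ℝ) + 2) * (a + 1) * |pd (a, b) cauchyKer x|
          ≤ ((a : ℝ) + 2) * (a + 1) * (3 ^ (a + b) * (Nat.factorial a * Nat.factorial b)) := by
            gcongr
        _ = T / 9 := by
          rw [hT, Nat.factorial_succ, Nat.factorial_succ, show a + 1 + 1 + b = a + b + 2 by ring]
          push_cast; ring
  have t3 : |(b : ℝ) * pd (a, b - 1) cauchyKer x| ≤ T / 3 := by
    rcases b with _ | b
    · simp; positivity
    · have h := ih (a + b) (by omega) a b rfl x
      rw [abs_mul, Nat.abs_cast, Nat.add_sub_cancel]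
      calc ((b + 1 : ℕ) : ℝ) * |pd (a, b) cauchyKer x|
          ≤ ((b + 1 : ℕ) : ℝ) * (3 ^ (a + b) * (Nat.factorial a * Nat.factorial b)) := by gcongr
        _ = T / 3 := by
          rw [hT, Nat.factorial_succ, show a + (b + 1) = a + b + 1 by ring]; push_cast; ring
  have t4 : |(b : ℝ) * (b - 1) * pd (a, b - 2) cauchyKer x| ≤ T / 9 := by
    rcases b with _ | _ | b
    · simp; positivity
    · simp; positivity
    · have h := ih (a + b) (by omega) a b rfl x
      have e : (((b + 1 + 1 : ℕ) : ℝ) * (((b + 1 + 1 : ℕ) : ℝ) - 1)) = ((b : ℝ) + 2) * (b + 1) := by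
        push_cast; ring
      rw [abs_mul, e, abs_of_nonneg (by positivity : (0 : ℝ) ≤ ((b : ℝ) + 2) * (b + 1)),
        show b + 1 + 1 - 2 = b by omega]
      calc ((b : ℝ) + 2) * (b + 1) * |pd (a, b) cauchyKer x|
          ≤ ((b : ℝ) + 2) * (b + 1) * (3 ^ (a + b) * (Nat.factorial a * Nat.factorial b)) := by
            gcongr
        _ = T / 9 := by
          rw [hT, Nat.factorial_succ, Nat.factorial_succ, show a + (b + 1 + 1) = a + b + 2 by ring]
          push_cast; ring
  simp only [leib] at hL
  set P := pd (a, b) cauchyKer x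
  set A1 := (a : ℝ) * pd (a - 1, b) cauchyKer x with hA1
  set A2 := (a : ℝ) * (a - 1) * pd (a - 2, b) cauchyKer x
  set B1 := (b : ℝ) * pd (a, b - 1) cauchyKer x with hB1
  set B2 := (b : ℝ) * (b - 1) * pd (a, b - 2) cauchyKer x
  have hP : (x.1 ^ 2 + x.2 ^ 2 + 1) * P = -(2 * x.1 * A1 + A2 + 2 * x.2 * B1 + B2) := by
    rw [hA1, hB1]; linarith
  have hx : |2 * x.1 * A1| ≤ (x.1 ^ 2 + 1) * (T / 3) := by
    rw [abs_mul]
    refine mul_le_mul ?_ t1 (abs_nonneg _) (by positivity)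
    rw [abs_le]; constructor <;> nlinarith [sq_nonneg (x.1 + 1), sq_nonneg (x.1 - 1)]
  have hy : |2 * x.2 * B1| ≤ (x.2 ^ 2 + 1) * (T / 3) := by
    rw [abs_mul]
    refine mul_le_mul ?_ t3 (abs_nonneg _) (by positivity)
    rw [abs_le]; constructor <;> nlinarith [sq_nonneg (x.2 + 1), sq_nonneg (x.2 - 1)]
  have hfin : (x.1 ^ 2 + x.2 ^ 2 + 1) * |P| ≤ (x.1 ^ 2 + x.2 ^ 2 + 1) * T := by
    rw [← abs_of_pos hQ, ← abs_mul, abs_of_pos hQ, hP, abs_neg]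
    have h3 : |2 * x.1 * A1 + A2 + 2 * x.2 * B1 + B2|
        ≤ |2 * x.1 * A1| + |A2| + |2 * x.2 * B1| + |B2| :=
      (abs_add_le _ _).trans (add_le_add ((abs_add_le _ _).trans
        (add_le_add (abs_add_le _ _) le_rfl)) le_rfl)
    have h4 : 0 ≤ x.1 ^ 2 * T := by positivity
    have h5 : 0 ≤ x.2 ^ 2 * T := by positivity
    nlinarith
  exact le_of_mul_le_mul_left hfin hQ

/-! ### The Ostrowski function at the quotients of `M` -/

/-- At `r = M (j+1) / M j` the supremum is finite: by log-convexity the terms do not increase from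
index `j` on. -/
lemma ostrowski_ge {M : ℕ → ℝ} (hMpos : ∀ k, 0 < M k) (hMlc : LogConvexSeq M) (j n : ℕ) :
    (M (j + 1) / M j) ^ (n + 2) / M n ≤ ostrowski M (M (j + 1) / M j) := by
  set r := M (j + 1) / M j with hr
  have hrpos : 0 < r := div_pos (hMpos _) (hMpos _)
  have hpos : ∀ n, 0 < r ^ (n + 2) / M n := fun n => div_pos (pow_pos hrpos _) (hMpos n)
  have hstep : ∀ n, j ≤ n → r ^ (n + 1 + 2) / M (n + 1) ≤ r ^ (n + 2) / M n := by
    intro n hn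
    have h : r ≤ M (n + 1) / M n := hMlc hn
    rw [le_div_iff₀ (hMpos n)] at h
    rw [div_le_div_iff₀ (hMpos _) (hMpos _)]
    calc r ^ (n + 1 + 2) * M n = r ^ (n + 2) * (r * M n) := by ring
      _ ≤ r ^ (n + 2) * M (n + 1) := by gcongr
  have hbd : BddAbove (Set.range fun n : ℕ => r ^ (n + 2) / M n) := by
    refine ⟨∑ i ∈ Finset.range (j + 1), r ^ (i + 2) / M i, ?_⟩
    have hsmall : ∀ n, n ≤ j →
        r ^ (n + 2) / M n ≤ ∑ i ∈ Finset.range (j + 1), r ^ (i + 2) / M i := fun n hn =>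
      Finset.single_le_sum (f := fun i => r ^ (i + 2) / M i) (fun i _ => (hpos i).le)
        (Finset.mem_range.2 (by omega))
    rintro _ ⟨n, rfl⟩
    rcases le_total n j with h | h
    · exact hsmall n h
    · induction n, h using Nat.le_induction with
      | base => exact hsmall j le_rfl
      | succ n hn ih => exact (hstep n hn).trans ih
  exact le_ciSup hbd n

lemma ostrowski_pos {M : ℕ → ℝ} (hMpos : ∀ k, 0 < M k) (hMlc : LogConvexSeq M) (j : ℕ) :
    0 < ostrowski M (M (j + 1) / M j) :=
  (div_pos (pow_pos (div_pos (hMpos _) (hMpos _)) _) (hMpos 0)).trans_le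
    (ostrowski_ge hMpos hMlc j 0)

lemma pow_div_ostrowski_le {M : ℕ → ℝ} (hMpos : ∀ k, 0 < M k) (hMlc : LogConvexSeq M)
    (j n : ℕ) :
    (M (j + 1) / M j) ^ (n + 2) / ostrowski M (M (j + 1) / M j) ≤ M n := by
  rw [div_le_comm₀ (ostrowski_pos hMpos hMlc j) (hMpos n)]
  exact ostrowski_ge hMpos hMlc j n

/-! ### Estimates for the base function and for the full series -/

lemma baseH_bound {M : ℕ → ℝ} (hMpos : ∀ k, 0 < M k) (hMlc : LogConvexSeq M) :
    ContDiff ℝ (⊤ : ℕ∞) (baseH M) ∧ ∀ a b x, |pd (a, b) (baseH M) x|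
      ≤ M b * (3 ^ (a + b) * (Nat.factorial a * Nat.factorial b)) := by
  set m : ℕ → ℝ := fun k => M (k + 2) / M (k + 1) with hm
  set d : ℕ → ℝ := fun k => m k ^ 2 / (2 ^ (k + 1) * ostrowski M (m k)) with hd
  have hEq : baseH M = fun x => ∑' k, (fun x : ℝ × ℝ =>
      d k * cauchyKer (1 * x.1 - 0, m k * x.2)) x := by
    funext x
    simp only [baseH, cauchyKer, hd, hm, one_mul, sub_zero]
  have hmpos : ∀ k, 0 < m k := fun k => div_pos (hMpos _) (hMpos _)
  have hopos : ∀ k, 0 < ostrowski M (m k) := fun k => ostrowski_pos hMpos hMlc (k + 1)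
  have h := tsum_bound (f := fun k (x : ℝ × ℝ) => d k * cauchyKer (1 * x.1 - 0, m k * x.2))
    (fun k => affine_smooth ker_smooth _ _ _ _)
    (fun a b => M b * (3 ^ (a + b) * (Nat.factorial a * Nat.factorial b)))
    (hasSum_geometric_two' 1) ?_
  · rw [hEq]
    refine ⟨h.1, fun a b x => (h.2 a b x).trans_eq (by ring)⟩
  · intro a b k x
    rw [affine_pd ker_smooth, one_pow, mul_one, abs_mul]
    have hdk : |d k * m k ^ b| ≤ M b * (1 / 2 / 2 ^ k) := by
      have hle : m k ^ (b + 2) / ostrowski M (m k) ≤ M b :=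
        pow_div_ostrowski_le hMpos hMlc (k + 1) b
      have hdp : 0 < d k * m k ^ b := by
        have := hmpos k
        have := hopos k
        simp only [hd]
        positivity
      rw [abs_of_pos hdp]
      calc d k * m k ^ b = m k ^ (b + 2) / ostrowski M (m k) * (1 / 2 / 2 ^ k) := by
            have := (hopos k).ne'
            simp only [hd]
            field_simp
            ring
        _ ≤ M b * (1 / 2 / 2 ^ k) := by gcongr
    calc _ ≤ M b * (1 / 2 / 2 ^ k) * (3 ^ (a + b) * (Nat.factorial a * Nat.factorial b)) :=
          mul_le_mul hdk (ker_bound _ a b rfl _) (abs_nonneg _)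
            ((abs_nonneg _).trans hdk)
      _ = _ := by ring

lemma FGamma_bound {M : ℕ → ℝ} (hMpos : ∀ k, 0 < M k) (hMmono : Monotone M)
    (hMlc : LogConvexSeq M) (E : ℝ → ℝ) (Λ : Set ℕ) :
    ContDiff ℝ (⊤ : ℕ∞) (FGamma M E Λ) ∧ ∀ a b x, |pd (a, b) (FGamma M E Λ) x|
      ≤ M (a + b) ^ 2 * (3 ^ (a + b) * (Nat.factorial a * Nat.factorial b)) * 2 := by
  obtain ⟨hS, hB⟩ := baseH_bound hMpos hMlc
  set m : ℕ → ℝ := fun l => M (l + 1) / M l with hm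
  set q : ℕ → ℝ := fun l => E (rhoSeq M l) / rhoSeq M l with hq
  set d : ℕ → ℝ := fun l => if l ∈ Λ then 1 / (ostrowski M (m l) * 2 ^ l) else 0 with hd
  have hinv : ∀ l, (rhoSeq M l)⁻¹ = m l := fun l => by simp only [rhoSeq, hm, inv_div]
  have hEq : FGamma M E Λ = fun x => ∑' l, (fun x : ℝ × ℝ =>
      d l * baseH M (m l * x.1 - q l, m l * x.2)) x := by
    funext x
    unfold FGamma
    refine tsum_congr fun l => ?_
    by_cases hl : l ∈ Λ
    · simp only [Set.indicator_of_mem hl, hd, if_pos hl, blockF, hinv, hq, div_eq_mul_inv x.1,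
        div_eq_mul_inv x.2, mul_comm x.1, mul_comm x.2]
      ring
    · simp [Set.indicator_of_notMem hl, hd, if_neg hl]
  -- Monotonicity of `M` makes the quotients at least one, which absorbs the two spare powers.
  have hm1 : ∀ l, 1 ≤ m l := fun l => (one_le_div (hMpos l)).2 (hMmono (Nat.le_succ l))
  have hopos : ∀ l, 0 < ostrowski M (m l) := fun l => ostrowski_pos hMpos hMlc l
  have h := tsum_bound
    (f := fun l (x : ℝ × ℝ) => d l * baseH M (m l * x.1 - q l, m l * x.2))
    (fun l => affine_smooth hS _ _ _ _)
    (fun a b => M (a + b) ^ 2 * (3 ^ (a + b) * (Nat.factorial a * Nat.factorial b)))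
    hasSum_geometric_two ?_
  · rw [hEq]
    exact h
  · intro a b l x
    rw [affine_pd hS, abs_mul]
    have hdl : |d l * m l ^ a * m l ^ b| ≤ M (a + b) * (1 / 2) ^ l := by
      have hMab := hMpos (a + b)
      by_cases hl : l ∈ Λ
      · have hle : m l ^ (a + b + 2) / ostrowski M (m l) ≤ M (a + b) :=
          pow_div_ostrowski_le hMpos hMlc l (a + b)
        have hml : 0 < m l := zero_lt_one.trans_le (hm1 l)
        have ho := hopos l
        simp only [hd, if_pos hl]
        rw [abs_of_pos (by positivity)]
        calc _ = m l ^ (a + b) / ostrowski M (m l) * (1 / 2) ^ l := by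
              rw [pow_add, one_div_pow]; field_simp
          _ ≤ m l ^ (a + b + 2) / ostrowski M (m l) * (1 / 2) ^ l := by
              have := pow_le_pow_right₀ (hm1 l) (show a + b ≤ a + b + 2 by omega)
              gcongr
          _ ≤ M (a + b) * (1 / 2) ^ l := by gcongr
      · simp only [hd, if_neg hl, zero_mul, abs_zero]
        positivity
    have hbase : |pd (a, b) (baseH M) (m l * x.1 - q l, m l * x.2)|
        ≤ M (a + b) * (3 ^ (a + b) * (Nat.factorial a * Nat.factorial b)) := by
      refine (hB a b _).trans ?_
      have := hMmono (show b ≤ a + b by omega)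
      gcongr
    calc _ ≤ M (a + b) * (1 / 2) ^ l
            * (M (a + b) * (3 ^ (a + b) * (Nat.factorial a * Nat.factorial b))) :=
          mul_le_mul hdl hbase (abs_nonneg _) ((abs_nonneg _).trans hdl)
      _ = _ := by ring

/-- Lemma 3.9 (regularity of `F_Γ`): the function
`F_Γ(x) = Σ_{λ∈Λ} f_{q_λ,ρ_λ}(x)/(φ(ρ_λ⁻¹) 2^λ)` is `C^∞` on `ℝ²`, satisfies
`|∂^α F_Γ(x)| ≤ 8^{|α|+3} α! M_{|α|}²`, and hence belongs to `C_{M²}(ℝ²)`. -/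
theorem FGamma_in_CMsq (M : ℕ → ℝ) (hMpos : ∀ k, 0 < M k) (hMmono : Monotone M)
    (hMlc : LogConvexSeq M) (hM0 : M 0 = 1)
    (E : ℝ → ℝ) (hEmap : ∀ r : ℝ, 0 ≤ r → 0 ≤ E r ∧ E r < 1)
    (hEmono : StrictMonoOn E (Set.Ici 0)) (hEcont : ContinuousOn E (Set.Ici 0))
    (hE0 : E 0 = 0) (hElim : Tendsto (fun r => E r / r) (𝓝[>] (0 : ℝ)) atTop)
    (Λ : Set ℕ) (hΛeven : ∀ l ∈ Λ, Even l ∧ 0 < l) (hΛunb : ∀ n : ℕ, ∃ l ∈ Λ, n < l)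
    (hΛq : ∀ l ∈ Λ, 1 < E (rhoSeq M l) / rhoSeq M l) :
    ContDiff ℝ (⊤ : ℕ∞) (FGamma M E Λ) ∧
    (∀ x : ℝ × ℝ, ∀ α : ℕ × ℕ,
      |pd α (FGamma M E Λ) x| ≤
        8 ^ (α.1 + α.2 + 3) * (Nat.factorial α.1 * Nat.factorial α.2) *
          M (α.1 + α.2) ^ 2) ∧
    MemDC (fun k => M k ^ 2) (FGamma M E Λ) := by
  obtain ⟨hS, hB⟩ := FGamma_bound hMpos hMmono hMlc E Λ
  have hmain : ∀ x : ℝ × ℝ, ∀ α : ℕ × ℕ,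
      |pd α (FGamma M E Λ) x| ≤
        8 ^ (α.1 + α.2 + 3) * (Nat.factorial α.1 * Nat.factorial α.2) *
          M (α.1 + α.2) ^ 2 := by
    rintro x ⟨a, b⟩
    refine (hB a b x).trans ?_
    have h38 : (3 : ℝ) ^ (a + b) * 2 ≤ 8 ^ (a + b + 3) := by
      rw [pow_add (8 : ℝ) (a + b) 3]
      exact mul_le_mul (pow_le_pow_left₀ (by norm_num) (by norm_num) _) (by norm_num)
        (by norm_num) (by positivity)
    calc _ = (3 : ℝ) ^ (a + b) * 2 * (Nat.factorial a * Nat.factorial b) * M (a + b) ^ 2 := by ring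
      _ ≤ _ := by gcongr
  refine ⟨hS, hmain, hS, fun K _ => ⟨8 ^ 3, by norm_num, 8, by norm_num, fun x _ α => ?_⟩⟩
  refine (hmain x α).trans_eq ?_
  rw [pow_add (8 : ℝ) (α.1 + α.2) 3]
  ring
end
end

section
/- Let M = (M_k) be a nondecreasing logarithmically convex sequence of positive real numbers with M_0 = 1 such that sup_k (M_{k+1}/M_k)^{1/k} < ∞ (C_M is closed under differentiation) and lim_k M_k^{1/k} = ∞ (C_M properly contains the analytic functions). Let E : [0,∞) → [0,1) be an increasing continuous function with E(0) = 0 and lim_{r→0⁺} E(r)/r = ∞, set ρ_n := M_n/M_{n+1} and q_n := E(ρ_n)/ρ_n, let Λ be an unbounded set of positive even integers with q_λ > 1 for all λ ∈ Λ, and set δ_λ := dist(E(ρ_λ), {E(ρ_{λ'}) : λ' ∈ Λ, λ' ≠ λ}). Then there is a constant B > 0, depending only on M, with the following property: if there exists λ₀ ∈ Λ such that δ_λ ≥ B·M_λ^{−1/λ} for all λ ∈ Λ with λ ≥ λ₀, then there exist ε > 0 and points x_λ := (E(ρ_λ), 0) → (0,0) such that |∂^λ F_Γ/∂x₂^λ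 (x_λ)| ≥ ε^λ·λ!·M_λ·M_λ/4^λ for every λ ∈ Λ with λ ≥ λ₀, where F_Γ(x) := Σ_{λ∈Λ} f_{q_λ,ρ_λ}(x)/(φ(ρ_λ^{−1})·2^λ). -/
/-!
Vertical derivatives of even order `l = 2j` of `1 / (x₁² + x₂² + 1)` on the axis `x₂ = 0` equal
`(-1)^j l! / (x₁² + 1)^(j+1)` (`kern_vderiv_even`), so they all carry the sign `(-1)^j`. Both `h`
and `F_Γ` are series, with nonnegative coefficients, of rescaled horizontal translates of this
kernel; hence at a point of the axis no cancellation occurs between the blocks, and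
`|∂₂^l F_Γ|` is at least the contribution of any single summand. For this reason `B = 1` serves.

The summand with block index `l` and inner index `l` contributes at `(E(ρ_l), 0)` exactly
`l! · m_l^(l+2) / (2^l φ(m_l)) · m_l^l / (2^l φ(m_l))`. Log-convexity gives
`φ(m_l) = m_l^(l+2) / M_l` (`ostrowski_le`), so this equals `l! M_l² m_l⁻² / 4^l`, and closedness
under differentiation bounds `m_l` by `C^l`, whence `ε = C⁻²`.

Termwise differentiation in the Fréchet sense needs uniform bounds (`series_lemma`): every
derivative of the kernel is bounded on the plane (`kern_bounds`), and `φ(r) ≥ r^(n+2) / M_n`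
makes the weights summable against every power of the scales.
-/

open Real Filter Topology
open scoped Classical
noncomputable section
/-! ### Bounds for the kernel -/

/-- The kernel `1 / (x₁² + x₂² + 1)`; every summand of `baseH` is a multiple of this function
precomposed with a diagonal linear map. -/
def kern (x : ℝ × ℝ) : ℝ := 1 / (x.1 ^ 2 + x.2 ^ 2 + 1)

/-- The differential of `x₁² + x₂²`, as a linear function of the base point. -/
def dquad : ℝ × ℝ →L[ℝ] (ℝ × ℝ →L[ℝ] ℝ) :=
  (ContinuousLinearMap.fst ℝ ℝ ℝ).smulRight ((2 : ℝ) • ContinuousLinearMap.fst ℝ ℝ ℝ) +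
    (ContinuousLinearMap.snd ℝ ℝ ℝ).smulRight ((2 : ℝ) • ContinuousLinearMap.snd ℝ ℝ ℝ)

lemma kern_contDiff : ContDiff ℝ (⊤ : ℕ∞) kern := by
  unfold kern
  refine ContDiff.div contDiff_const (by fun_prop) fun x => ?_
  positivity

lemma hasFDerivAt_kern (x : ℝ × ℝ) :
    HasFDerivAt kern ((-(kern x * kern x)) • dquad x) x := by
  have h1 : HasFDerivAt (fun y : ℝ × ℝ => y.1 ^ 2 + y.2 ^ 2 + 1) (dquad x) x := by
    have h := (((hasFDerivAt_fst (𝕜 := ℝ) (p := x)).pow 2).add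
      ((hasFDerivAt_snd (𝕜 := ℝ) (p := x)).pow 2)).add_const 1
    refine h.congr_fderiv ?_
    ext <;> simp [dquad, mul_comm]
  have hne : x.1 ^ 2 + x.2 ^ 2 + 1 ≠ 0 := by positivity
  have h2 := (hasDerivAt_inv hne).comp_hasFDerivAt x h1
  have e : kern = Inv.inv ∘ fun y : ℝ × ℝ => y.1 ^ 2 + y.2 ^ 2 + 1 := by
    funext y; simp [kern]
  rw [e]
  refine h2.congr_fderiv (ContinuousLinearMap.ext fun z => ?_)
  simp [pow_two]

lemma fderiv_kern : fderiv ℝ kern = fun x => (-(kern x * kern x)) • dquad x :=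
  funext fun x => (hasFDerivAt_kern x).fderiv

/-- Leibniz rule for pointwise bounds: weights of derivative bounds multiply under products. -/
lemma smul_bounds {F : Type*} [NormedAddCommGroup F] [NormedSpace ℝ F] {f : ℝ × ℝ → ℝ}
    {g : ℝ × ℝ → F} (hf : ContDiff ℝ (⊤ : ℕ∞) f) (hg : ContDiff ℝ (⊤ : ℕ∞) g)
    (a b : ℝ × ℝ → ℝ) (n : ℕ)
    (hfa : ∀ i ≤ n, ∃ C : ℝ, ∀ x, ‖iteratedFDeriv ℝ i f x‖ ≤ C * a x)
    (hgb : ∀ i ≤ n, ∃ C : ℝ, ∀ x, ‖iteratedFDeriv ℝ i g x‖ ≤ C * b x) :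
    ∃ C : ℝ, ∀ x, ‖iteratedFDeriv ℝ n (fun y => f y • g y) x‖ ≤ C * (a x * b x) := by
  choose! Cf hCf using hfa
  choose! Cg hCg using hgb
  refine ⟨∑ i ∈ Finset.range (n + 1), (n.choose i : ℝ) * Cf i * Cg (n - i), fun x => ?_⟩
  refine (norm_iteratedFDeriv_smul_le hf hg x (n := n) (mod_cast le_top)).trans ?_
  rw [Finset.sum_mul]
  refine Finset.sum_le_sum fun i hi => ?_
  have hi' : i ≤ n := Nat.lt_succ_iff.mp (Finset.mem_range.mp hi)
  have h1 := hCf i hi' x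
  have h2 := hCg (n - i) (Nat.sub_le _ _) x
  calc (n.choose i : ℝ) * ‖iteratedFDeriv ℝ i f x‖ * ‖iteratedFDeriv ℝ (n - i) g x‖
      ≤ (n.choose i : ℝ) * (Cf i * a x) * (Cg (n - i) * b x) := by
        have h0 := (norm_nonneg _).trans h1
        gcongr
    _ = _ := by ring

lemma dquad_bounds (n : ℕ) :
    ∃ C : ℝ, ∀ x, ‖iteratedFDeriv ℝ n (fun y => dquad y) x‖ ≤ C * (1 + ‖x‖) := by
  refine ⟨‖dquad‖, fun x => ?_⟩
  rcases n with _ | n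
  · rw [norm_iteratedFDeriv_zero]
    refine (dquad.le_opNorm x).trans ?_
    gcongr
    linarith
  · rw [← norm_iteratedFDeriv_fderiv]
    have : fderiv ℝ (fun y => dquad y) = fun _ => dquad := funext fun y => dquad.fderiv
    rw [this]
    rcases n with _ | n
    · rw [norm_iteratedFDeriv_zero]
      nlinarith [norm_nonneg dquad, norm_nonneg x]
    · rw [iteratedFDeriv_succ_const]
      simp only [Pi.zero_apply, norm_zero]
      positivity

/-- Each derivative of the kernel decays like `1 / (1 + ‖x‖)`. The weight reproduces itself in the
identity `D kern = -kern² • dquad`, as `dquad` grows linearly. -/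
lemma kern_bounds (n : ℕ) :
    ∃ C : ℝ, ∀ x, ‖iteratedFDeriv ℝ n kern x‖ ≤ C * (1 + ‖x‖)⁻¹ := by
  induction n using Nat.strong_induction_on with
  | _ n ih =>
    rcases n with _ | n
    · refine ⟨2, fun x => ?_⟩
      rw [norm_iteratedFDeriv_zero]
      have hx : ‖x‖ ^ 2 ≤ x.1 ^ 2 + x.2 ^ 2 := by
        rcases max_choice ‖x.1‖ ‖x.2‖ with h | h <;> rw [Prod.norm_def, h] <;>
          simp only [Real.norm_eq_abs, sq_abs] <;> nlinarith [sq_nonneg x.1, sq_nonneg x.2]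
      have hp : 0 < x.1 ^ 2 + x.2 ^ 2 + 1 := by positivity
      have hq : 0 < 1 + ‖x‖ := by positivity
      rw [kern, Real.norm_of_nonneg (by positivity), ← div_eq_mul_inv, div_le_div_iff₀ hp hq]
      nlinarith [sq_nonneg (‖x‖ - 1)]
    · have h1 : ∀ i ≤ n, ∃ C : ℝ, ∀ x,
          ‖iteratedFDeriv ℝ i (fun y => kern y • kern y) x‖ ≤
            C * ((1 + ‖x‖)⁻¹ * (1 + ‖x‖)⁻¹) := fun i hi =>
        smul_bounds kern_contDiff kern_contDiff _ _ i (fun j hj => ih j (by omega))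
          (fun j hj => ih j (by omega))
      have h2 := smul_bounds (kern_contDiff.smul kern_contDiff) dquad.contDiff
        (fun x => (1 + ‖x‖)⁻¹ * (1 + ‖x‖)⁻¹) (fun x => 1 + ‖x‖) n h1 fun i _ => dquad_bounds i
      obtain ⟨C, hC⟩ := h2
      refine ⟨C, fun x => ?_⟩
      have hq : (1 + ‖x‖) ≠ 0 := by positivity
      have e : fderiv ℝ kern = -fun y => (kern y • kern y) • dquad y := by
        rw [fderiv_kern]; funext y; exact ContinuousLinearMap.ext fun z => by simp
      rw [← norm_iteratedFDeriv_fderiv, e, iteratedFDeriv_neg, Pi.neg_apply, norm_neg]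
      refine (hC x).trans (le_of_eq ?_)
      field_simp

/-! ### Vertical derivatives -/

/-- `n`-th derivative in the direction of the second coordinate. -/
def vderiv (n : ℕ) (f : ℝ × ℝ → ℝ) (x : ℝ × ℝ) : ℝ :=
  iteratedFDeriv ℝ n f x fun _ => (0, 1)

lemma hasFDerivAt_vderiv {f : ℝ × ℝ → ℝ} (hf : ContDiff ℝ (⊤ : ℕ∞) f) (n : ℕ) (x : ℝ × ℝ) :
    ∃ L : ℝ × ℝ →L[ℝ] ℝ, HasFDerivAt (vderiv n f) L x ∧ L (0, 1) = vderiv (n + 1) f x := by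
  have hd : DifferentiableAt ℝ (iteratedFDeriv ℝ n f) x :=
    (hf.differentiable_iteratedFDeriv (m := n)
      (by exact_mod_cast ENat.natCast_lt_top n)) x
  refine ⟨_, (ContinuousMultilinearMap.apply ℝ (fun _ : Fin n => ℝ × ℝ) ℝ
    (fun _ => (0, 1))).hasFDerivAt.comp x hd.hasFDerivAt, ?_⟩
  rfl

lemma pd_eq_vderiv {f : ℝ × ℝ → ℝ} (hf : ContDiff ℝ (⊤ : ℕ∞) f) (n : ℕ) :
    pd (0, n) f = vderiv n f := by
  simp only [pd, Function.iterate_zero, id]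
  induction n with
  | zero => funext x; simp [vderiv]
  | succ n ih =>
    rw [Function.iterate_succ_apply', ih]
    funext x
    obtain ⟨L, hL, hL'⟩ := hasFDerivAt_vderiv hf n x
    rw [pd2, hL.fderiv, hL']

lemma hasDerivAt_vderiv {f : ℝ × ℝ → ℝ} (hf : ContDiff ℝ (⊤ : ℕ∞) f) (n : ℕ) (a t : ℝ) :
    HasDerivAt (fun s => vderiv n f (a, s)) (vderiv (n + 1) f (a, t)) t := by
  obtain ⟨L, hL, hL'⟩ := hasFDerivAt_vderiv hf n (a, t)
  rw [← hL']
  exact hL.comp_hasDerivAt t ((hasDerivAt_const t a).prodMk (hasDerivAt_id t))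

/-- Three-term recurrence for the vertical derivatives of the kernel, from differentiating
`kern · (x₁² + x₂² + 1) = 1`. For `n = 0` the truncated index `n - 1` has coefficient `0`. -/
lemma kern_recurrence (a : ℝ) (n : ℕ) : ∀ t : ℝ,
    (a ^ 2 + t ^ 2 + 1) * vderiv (n + 1) kern (a, t) + 2 * (n + 1) * t * vderiv n kern (a, t)
      + (n + 1) * n * vderiv (n - 1) kern (a, t) = 0 := by
  have hp : ∀ t : ℝ, HasDerivAt (fun s : ℝ => a ^ 2 + s ^ 2 + 1) (2 * t) t := fun t => by
    simpa using (((hasDerivAt_id t).pow 2).const_add (a ^ 2)).add_const 1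
  have hk := hasDerivAt_vderiv kern_contDiff (a := a)
  induction n with
  | zero =>
    intro t
    have h := (hp t).mul (hk 0 t)
    have e : ((fun s : ℝ => a ^ 2 + s ^ 2 + 1) * fun s => vderiv 0 kern (a, s)) = fun _ => 1 := by
      funext s
      have : a ^ 2 + s ^ 2 + 1 ≠ 0 := by positivity
      simp [vderiv, kern, this]
    rw [e] at h
    have := h.unique (hasDerivAt_const t 1)
    push_cast
    linarith
  | succ n ih =>
    intro t
    have h := ((((hp t).mul (hk (n + 1) t)).add
      (((hasDerivAt_id t).const_mul (2 * ((n : ℝ) + 1))).mul (hk n t)))).add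
      ((hk (n - 1) t).const_mul (((n : ℝ) + 1) * n))
    have h0 := h.unique ((hasDerivAt_const t (0 : ℝ)).congr_of_eventuallyEq
      (Filter.Eventually.of_forall fun s => by simpa using ih s))
    have e : ((n : ℝ) + 1) * n * vderiv (n - 1 + 1) kern (a, t)
        = (n + 1) * n * vderiv n kern (a, t) := by
      rcases n with _ | n
      · simp
      · simp
    simp only [id, Nat.add_sub_cancel] at h0 ⊢
    push_cast
    linarith

lemma kern_vderiv_even (a : ℝ) (j : ℕ) :
    (-1) ^ j * vderiv (2 * j) kern (a, 0) = (2 * j).factorial / (a ^ 2 + 1) ^ (j + 1) := by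
  induction j with
  | zero => simp [vderiv, kern]
  | succ j ih =>
    have h := kern_recurrence a (2 * j + 1) 0
    have hp : a ^ 2 + 1 ≠ 0 := by positivity
    rw [show 2 * (j + 1) = 2 * j + 1 + 1 by ring]
    simp only [Nat.add_sub_cancel] at h
    rw [eq_div_iff (by positivity)] at ih ⊢
    rw [Nat.factorial_succ, Nat.factorial_succ]
    push_cast at h ⊢
    rw [← ih]
    linear_combination (-1) ^ (j + 1) * (a ^ 2 + 1) ^ (j + 1) * h

/-! ### Series of rescaled translates -/

/-- Superposition of rescaled translates: if all derivatives of `f` are bounded and the weights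
`c i` are summable against every power of the scales `R i`, the series is
smooth with bounded derivatives, and its vertical derivatives are computed termwise. -/
lemma series_lemma {f : ℝ × ℝ → ℝ} (hf : ContDiff ℝ (⊤ : ℕ∞) f)
    (hb : ∀ n : ℕ, ∃ C : ℝ, ∀ x, ‖iteratedFDeriv ℝ n f x‖ ≤ C)
    (c a b v R : ℕ → ℝ) (hc : ∀ i, 0 ≤ c i) (ha : ∀ i, |a i| ≤ R i) (hbR : ∀ i, |b i| ≤ R i)
    (hs : ∀ n : ℕ, Summable fun i => c i * R i ^ n)
    {F : ℝ × ℝ → ℝ} (hF : ∀ x, F x = ∑' i, c i * f (a i * x.1 + v i, b i * x.2)) :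
    ContDiff ℝ (⊤ : ℕ∞) F ∧ (∀ n : ℕ, ∃ C : ℝ, ∀ x, ‖iteratedFDeriv ℝ n F x‖ ≤ C) ∧
      ∀ n x, HasSum (fun i => c i * (b i ^ n * vderiv n f (a i * x.1 + v i, b i * x.2)))
        (vderiv n F x) := by
  choose C hC using hb
  set L : ℕ → (ℝ × ℝ →L[ℝ] ℝ × ℝ) := fun i =>
    ((a i) • ContinuousLinearMap.id ℝ ℝ).prodMap ((b i) • ContinuousLinearMap.id ℝ ℝ) with hL
  have hLapp : ∀ i x, L i x = (a i * x.1, b i * x.2) := fun i x => rfl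
  have hLn : ∀ i, ‖L i‖ ≤ R i := fun i => by
    have hR : 0 ≤ R i := (abs_nonneg _).trans (ha i)
    refine (L i).opNorm_le_bound hR fun x => ?_
    rw [hLapp, Prod.norm_def]
    simp only [norm_mul, Real.norm_eq_abs]
    refine max_le (mul_le_mul (ha i) (norm_fst_le x) (abs_nonneg _) hR)
      (mul_le_mul (hbR i) (norm_snd_le x) (abs_nonneg _) hR)
  set g : ℕ → ℝ × ℝ → ℝ := fun i x => c i • f (L i x + (v i, 0)) with hg
  have hft : ∀ i, ContDiff ℝ (⊤ : ℕ∞) fun y => f (y + (v i, 0)) := fun i =>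
    hf.comp (contDiff_id.add contDiff_const)
  have hfL : ∀ i, ContDiff ℝ (⊤ : ℕ∞) fun x => f (L i x + (v i, 0)) := fun i =>
    (hft i).comp (L i).contDiff
  have hgd : ∀ i, ContDiff ℝ (⊤ : ℕ∞) (g i) := fun i => (hfL i).const_smul (c i)
  have hgi : ∀ n i x, iteratedFDeriv ℝ n (g i) x = c i •
      (iteratedFDeriv ℝ n f (L i x + (v i, 0))).compContinuousLinearMap fun _ => L i := by
    intro n i x
    have h1 : iteratedFDeriv ℝ n (g i) x
        = c i • iteratedFDeriv ℝ n ((fun y => f (y + (v i, 0))) ∘ L i) x :=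
      iteratedFDeriv_const_smul_apply (a := c i) (i := n) (x := x)
        ((hfL i).of_le (mod_cast le_top)).contDiffAt
    rw [h1, (L i).iteratedFDeriv_comp_right (hft i) x (mod_cast le_top),
      iteratedFDeriv_comp_add_right]
  have hgb : ∀ n i x, ‖iteratedFDeriv ℝ n (g i) x‖ ≤ C n * (c i * R i ^ n) := by
    intro n i x
    rw [hgi, norm_smul, Real.norm_of_nonneg (hc i)]
    have h1 := ContinuousMultilinearMap.norm_compContinuousLinearMap_le
      (iteratedFDeriv ℝ n f (L i x + (v i, 0))) (fun _ => L i)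
    simp only [Finset.prod_const, Finset.card_univ, Fintype.card_fin] at h1
    calc c i * _ ≤ c i * (C n * R i ^ n) := by
          refine mul_le_mul_of_nonneg_left (h1.trans ?_) (hc i)
          have h2 := hC n (L i x + (v i, 0))
          have h0 := (norm_nonneg _).trans h2
          gcongr
          exact hLn i
      _ = _ := by ring
  have hsum : ∀ n : ℕ, Summable fun i => C n * (c i * R i ^ n) := fun n => (hs n).mul_left _
  have hFg : F = fun x => ∑' i, g i x := by
    funext x; rw [hF]; simp [hg, hLapp]
  have hit : ∀ n x, iteratedFDeriv ℝ n F x = ∑' i, iteratedFDeriv ℝ n (g i) x := fun n x => by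
    rw [hFg]
    exact iteratedFDeriv_tsum_apply (N := ⊤) (v := fun n i => C n * (c i * R i ^ n)) hgd
      (fun k _ => hsum k) (fun k i x _ => hgb k i x) le_top x
  have hsn : ∀ n x, Summable fun i => iteratedFDeriv ℝ n (g i) x := fun n x =>
    Summable.of_norm_bounded (hsum n) fun i => hgb n i x
  refine ⟨?_, fun n => ⟨∑' i, C n * (c i * R i ^ n), fun x => ?_⟩, fun n x => ?_⟩
  · rw [hFg]
    exact contDiff_tsum (N := ⊤) (v := fun n i => C n * (c i * R i ^ n)) hgd
      (fun k _ => hsum k) (fun k i x _ => hgb k i x)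
  · rw [hit]
    exact tsum_of_norm_bounded (hsum n).hasSum fun i => hgb n i x
  · have h1 := (hsn n x).hasSum
    rw [← hit] at h1
    have h2 := (ContinuousMultilinearMap.apply ℝ (fun _ : Fin n => ℝ × ℝ) ℝ
      (fun _ => (0, 1))).hasSum h1
    have h3 : HasSum (fun i => iteratedFDeriv ℝ n (g i) x fun _ => ((0 : ℝ), (1 : ℝ)))
      (vderiv n F x) := h2
    have key : ∀ i, iteratedFDeriv ℝ n (g i) x (fun _ => ((0 : ℝ), (1 : ℝ))) =
        c i * (b i ^ n * vderiv n f (a i * x.1 + v i, b i * x.2)) := by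
      intro i
      have e : L i (0, 1) = b i • ((0 : ℝ), (1 : ℝ)) := by simp [hLapp]
      have e2 : L i x + (v i, 0) = (a i * x.1 + v i, b i * x.2) := by simp [hLapp]
      rw [hgi, smul_apply,
        ContinuousMultilinearMap.compContinuousLinearMap_apply, smul_eq_mul, e, e2,
        ContinuousMultilinearMap.map_smul_univ (c := fun _ => b i)]
      simp [vderiv]
    simpa only [key] using h3

/-! ### The Ostrowski function and the base function -/

section Weights

variable {M : ℕ → ℝ}

lemma ostrowski_bddAbove (hMpos : ∀ k, 0 < M k)
    (hMan : Tendsto (fun k : ℕ => M k ^ ((k : ℝ)⁻¹)) atTop atTop) {r : ℝ} (hr : 0 < r) :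
    BddAbove (Set.range fun n : ℕ => r ^ (n + 2) / M n) := by
  refine Filter.IsBoundedUnder.bddAbove_range ⟨r ^ 2, ?_⟩
  rw [Filter.eventually_map]
  filter_upwards [hMan.eventually_ge_atTop r, Filter.eventually_gt_atTop 0] with n hn h0
  have h1 : r ^ n ≤ M n := by
    calc r ^ n ≤ (M n ^ ((n : ℝ)⁻¹)) ^ n := by gcongr
      _ = M n := Real.rpow_inv_natCast_pow (hMpos n).le h0.ne'
  rw [div_le_iff₀ (hMpos n), pow_add, mul_comm]
  gcongr

lemma le_ostrowski (hMpos : ∀ k, 0 < M k)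
    (hMan : Tendsto (fun k : ℕ => M k ^ ((k : ℝ)⁻¹)) atTop atTop) {r : ℝ} (hr : 0 < r) (n : ℕ) :
    r ^ (n + 2) / M n ≤ ostrowski M r :=
  le_ciSup (ostrowski_bddAbove hMpos hMan hr) n

lemma ostrowski_pos_s18 (hMpos : ∀ k, 0 < M k)
    (hMan : Tendsto (fun k : ℕ => M k ^ ((k : ℝ)⁻¹)) atTop atTop) {r : ℝ} (hr : 0 < r) :
    0 < ostrowski M r :=
  (div_pos (pow_pos hr _) (hMpos 0)).trans_le (le_ostrowski hMpos hMan hr 0)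

lemma pow_div_ostrowski_le_s18 (hMpos : ∀ k, 0 < M k)
    (hMan : Tendsto (fun k : ℕ => M k ^ ((k : ℝ)⁻¹)) atTop atTop) {r : ℝ} (hr : 0 < r) (n : ℕ) :
    r ^ (n + 2) / ostrowski M r ≤ M n := by
  have h := le_ostrowski hMpos hMan hr n
  rw [div_le_iff₀ (hMpos n)] at h
  rw [div_le_iff₀ (ostrowski_pos_s18 hMpos hMan hr)]
  linarith

/-- By log-convexity the supremum defining the Ostrowski function at `m_l` is attained at index
`l`. -/
lemma ostrowski_le (hMpos : ∀ k, 0 < M k) (hMlc : LogConvexSeq M) (l : ℕ) :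
    ostrowski M (M (l + 1) / M l) ≤ (M (l + 1) / M l) ^ (l + 2) / M l := by
  set r := M (l + 1) / M l with hr
  have hr0 : 0 < r := div_pos (hMpos _) (hMpos _)
  have hup : ∀ j, r ^ j * M l ≤ M (l + j) := by
    intro j
    induction j with
    | zero => simp
    | succ j ih =>
      have h1 : r ≤ M (l + j + 1) / M (l + j) := hMlc (Nat.le_add_right l j)
      rw [le_div_iff₀ (hMpos _)] at h1
      calc r ^ (j + 1) * M l = r * (r ^ j * M l) := by ring
        _ ≤ r * M (l + j) := by gcongr
        _ ≤ _ := h1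
  have hdown : ∀ j n, n + j = l → M l ≤ r ^ j * M n := by
    intro j
    induction j with
    | zero => intro n hn; simp [← hn]
    | succ j ih =>
      intro n hn
      have h1 : M (n + 1) / M n ≤ r := hMlc (by omega : n ≤ l)
      rw [div_le_iff₀ (hMpos _)] at h1
      calc M l ≤ r ^ j * M (n + 1) := ih (n + 1) (by omega)
        _ ≤ r ^ j * (r * M n) := by gcongr
        _ = _ := by ring
  refine ciSup_le fun n => ?_
  rw [div_le_div_iff₀ (hMpos _) (hMpos _)]
  rcases le_total n l with h | h
  · obtain ⟨j, rfl⟩ := Nat.exists_eq_add_of_le h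
    calc r ^ (n + 2) * M (n + j) ≤ r ^ (n + 2) * (r ^ j * M n) := by
          gcongr; exact hdown j n rfl
      _ = _ := by ring
  · obtain ⟨j, rfl⟩ := Nat.exists_eq_add_of_le h
    calc r ^ (l + j + 2) * M l = r ^ (l + 2) * (r ^ j * M l) := by ring
      _ ≤ _ := by gcongr; exact hup j

lemma le_pow_div_ostrowski (hMpos : ∀ k, 0 < M k) (hMlc : LogConvexSeq M)
    (hMan : Tendsto (fun k : ℕ => M k ^ ((k : ℝ)⁻¹)) atTop atTop) (l : ℕ) :
    M l ≤ (M (l + 1) / M l) ^ (l + 2) / ostrowski M (M (l + 1) / M l) := by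
  have h := ostrowski_le hMpos hMlc l
  have hr0 : 0 < M (l + 1) / M l := div_pos (hMpos _) (hMpos _)
  rw [le_div_iff₀ (hMpos _)] at h
  rw [le_div_iff₀ (ostrowski_pos_s18 hMpos hMan hr0)]
  linarith

lemma one_le_ratio (hMpos : ∀ k, 0 < M k) (hMmono : Monotone M) (k : ℕ) :
    1 ≤ M (k + 1) / M k := by
  rw [one_le_div (hMpos k)]
  exact hMmono (Nat.le_succ k)

lemma ratio_tendsto (hMpos : ∀ k, 0 < M k) (hM0 : M 0 = 1) (hMlc : LogConvexSeq M)
    (hMan : Tendsto (fun k : ℕ => M k ^ ((k : ℝ)⁻¹)) atTop atTop) :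
    Tendsto (fun k => M (k + 1) / M k) atTop atTop := by
  have hle : ∀ l n, n ≤ l → M n ≤ (M (l + 1) / M l) ^ n := by
    intro l n
    induction n with
    | zero => simp [hM0]
    | succ n ih =>
      intro h
      have h1 : M (n + 1) / M n ≤ M (l + 1) / M l := hMlc (by omega : n ≤ l)
      rw [div_le_iff₀ (hMpos _)] at h1
      have h0 : 0 < M (l + 1) / M l := div_pos (hMpos _) (hMpos _)
      calc M (n + 1) ≤ M (l + 1) / M l * M n := h1
        _ ≤ M (l + 1) / M l * (M (l + 1) / M l) ^ n := by gcongr; exact ih (by omega)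
        _ = _ := by ring
  refine tendsto_atTop_mono' _ ?_ hMan
  filter_upwards [Filter.eventually_gt_atTop 0] with k hk
  have h0 : 0 < M (k + 1) / M k := div_pos (hMpos _) (hMpos _)
  calc M k ^ ((k : ℝ)⁻¹) ≤ ((M (k + 1) / M k) ^ k) ^ ((k : ℝ)⁻¹) :=
        Real.rpow_le_rpow (hMpos k).le (hle k k le_rfl) (by positivity)
    _ = _ := Real.pow_rpow_inv_natCast h0.le hk.ne'

/-- Smoothness of `h`, boundedness of its derivatives, and termwise vertical differentiation. -/
lemma baseH_props (hMpos : ∀ k, 0 < M k) (hMmono : Monotone M)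
    (hMan : Tendsto (fun k : ℕ => M k ^ ((k : ℝ)⁻¹)) atTop atTop) :
    ContDiff ℝ (⊤ : ℕ∞) (baseH M) ∧
    (∀ n : ℕ, ∃ C : ℝ, ∀ x, ‖iteratedFDeriv ℝ n (baseH M) x‖ ≤ C) ∧
      ∀ n x, HasSum (fun k => (M (k + 2) / M (k + 1)) ^ 2 /
        (2 ^ (k + 1) * ostrowski M (M (k + 2) / M (k + 1))) *
          ((M (k + 2) / M (k + 1)) ^ n * vderiv n kern (1 * x.1 + 0, M (k + 2) / M (k + 1) * x.2)))
        (vderiv n (baseH M) x) := by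
  have hr : ∀ k, 0 < M (k + 2) / M (k + 1) := fun k => div_pos (hMpos _) (hMpos _)
  have hφ : ∀ k, 0 < ostrowski M (M (k + 2) / M (k + 1)) := fun k =>
    ostrowski_pos_s18 hMpos hMan (hr k)
  refine series_lemma (f := kern) (F := baseH M) kern_contDiff (fun n => ?_)
    (fun k => (M (k + 2) / M (k + 1)) ^ 2 /
      (2 ^ (k + 1) * ostrowski M (M (k + 2) / M (k + 1))))
    (fun _ => 1) (fun k => M (k + 2) / M (k + 1)) (fun _ => 0)
    (fun k => M (k + 2) / M (k + 1)) (fun k => ?_) (fun k => ?_) (fun k => ?_) (fun n => ?_)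
    (fun x => ?_)
  · obtain ⟨C, hC⟩ := kern_bounds n
    refine ⟨|C|, fun x => (hC x).trans ?_⟩
    have h1 : (1 + ‖x‖)⁻¹ ≤ 1 := inv_le_one_of_one_le₀ (by linarith [norm_nonneg x])
    have h2 : 0 ≤ (1 + ‖x‖)⁻¹ := by positivity
    calc C * (1 + ‖x‖)⁻¹ ≤ |C| * 1 :=
          mul_le_mul (le_abs_self C) h1 h2 (abs_nonneg _)
      _ = _ := mul_one _
  · have := hr k
    have := hφ k
    positivity
  · rw [abs_one]; exact one_le_ratio hMpos hMmono (k + 1)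
  · rw [abs_of_pos (hr k)]
  · have hg : Summable fun k : ℕ => M n * ((1 / 2 : ℝ) ^ k) :=
      (summable_geometric_of_lt_one (by norm_num) (by norm_num)).mul_left _
    refine Summable.of_nonneg_of_le (fun k => ?_) (fun k => ?_) hg
    · have := hr k
      have := hφ k
      positivity
    · have h1 := pow_div_ostrowski_le_s18 hMpos hMan (hr k) n
      have h2 : (1 / 2 : ℝ) ^ (k + 1) ≤ (1 / 2) ^ k :=
        pow_le_pow_of_le_one (by norm_num) (by norm_num) (Nat.le_succ k)
      calc (M (k + 2) / M (k + 1)) ^ 2 /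
            (2 ^ (k + 1) * ostrowski M (M (k + 2) / M (k + 1))) * (M (k + 2) / M (k + 1)) ^ n
          = (M (k + 2) / M (k + 1)) ^ (n + 2) / ostrowski M (M (k + 2) / M (k + 1))
            * (1 / 2) ^ (k + 1) := by
            rw [pow_add _ n 2, one_div_pow]
            have := (hφ k).ne'
            field_simp
        _ ≤ M n * (1 / 2) ^ k := by
            have := (hMpos n).le
            gcongr
  · simp [baseH, kern]

/-- Vertical derivatives of order `2j` of `h` on the horizontal axis have the sign `(-1)^j`. -/
lemma baseH_vderiv_nonneg (hMpos : ∀ k, 0 < M k) (hMmono : Monotone M)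
    (hMan : Tendsto (fun k : ℕ => M k ^ ((k : ℝ)⁻¹)) atTop atTop) (j : ℕ) (a : ℝ) :
    0 ≤ (-1) ^ j * vderiv (2 * j) (baseH M) (a, 0) := by
  refine ((baseH_props hMpos hMmono hMan).2.2 (2 * j) (a, 0)).mul_left ((-1) ^ j) |>.nonneg ?_
  intro k
  have hr : 0 < M (k + 2) / M (k + 1) := div_pos (hMpos _) (hMpos _)
  have := ostrowski_pos_s18 hMpos hMan hr
  have h := kern_vderiv_even a j
  simp only [one_mul, add_zero, mul_zero]
  calc (0 : ℝ) ≤ (M (k + 2) / M (k + 1)) ^ 2 /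
      (2 ^ (k + 1) * ostrowski M (M (k + 2) / M (k + 1))) * ((M (k + 2) / M (k + 1)) ^ (2 * j) *
        ((2 * j).factorial / (a ^ 2 + 1) ^ (j + 1))) := by positivity
    _ = _ := by rw [← h]; ring

/-- The lower bound is the contribution of the summand of `h` involving `m_{2j}`. -/
lemma baseH_vderiv_lower (hMpos : ∀ k, 0 < M k) (hMmono : Monotone M) (hMlc : LogConvexSeq M)
    (hMan : Tendsto (fun k : ℕ => M k ^ ((k : ℝ)⁻¹)) atTop atTop) (j : ℕ) (hj : 0 < j) :
    (2 * j).factorial * M (2 * j) / 2 ^ (2 * j) ≤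
      (-1) ^ j * vderiv (2 * j) (baseH M) (0, 0) := by
  have hs := ((baseH_props hMpos hMmono hMan).2.2 (2 * j) (0, 0)).mul_left ((-1) ^ j)
  have h := kern_vderiv_even 0 j
  simp only [add_zero, mul_zero] at hs
  simp only [ne_eq, OfNat.ofNat_ne_zero, not_false_eq_true, zero_pow, zero_add, one_pow,
    div_one] at h
  have hval : ∀ k, (-1) ^ j * ((M (k + 2) / M (k + 1)) ^ 2 /
      (2 ^ (k + 1) * ostrowski M (M (k + 2) / M (k + 1))) * ((M (k + 2) / M (k + 1)) ^ (2 * j) *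
        vderiv (2 * j) kern (0, 0))) = (M (k + 2) / M (k + 1)) ^ (2 * j + 2) /
          ostrowski M (M (k + 2) / M (k + 1)) * (2 * j).factorial / 2 ^ (k + 1) := by
    intro k
    have hr : 0 < M (k + 2) / M (k + 1) := div_pos (hMpos _) (hMpos _)
    have := (ostrowski_pos_s18 hMpos hMan hr).ne'
    rw [← h, pow_add _ (2 * j) 2]
    field_simp
  simp only [hval] at hs
  -- `baseH` is indexed from `0`, so the summand involving `m_{2j}` is number `2j - 1`.
  have hle := le_hasSum hs (2 * j - 1) fun k _ => by
    have hr : 0 < M (k + 2) / M (k + 1) := div_pos (hMpos _) (hMpos _)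
    have := ostrowski_pos_s18 hMpos hMan hr
    positivity
  refine le_trans ?_ hle
  have e1 : 2 * j - 1 + 2 = 2 * j + 1 := by omega
  have e2 : 2 * j - 1 + 1 = 2 * j := by omega
  rw [e1, e2]
  have := le_pow_div_ostrowski hMpos hMlc hMan (2 * j)
  rw [mul_comm ((2 * j).factorial : ℝ)]
  gcongr

end Weights

/-! ### The lower estimate -/

/-- Lemma 3.11 (lower estimates on `F_Γ`): if `C_M` is closed under differentiation and
properly contains the analytic functions, there is `B > 0`, depending only on `M`, such
that whenever `δ_λ ≥ B M_λ^{-1/λ}` for all `λ ∈ Λ` with `λ ≥ lam0`, the points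
`x_λ = (E(ρ_λ), 0)` converge to `(0,0)` and there is `ε > 0` with
`|∂^λ F_Γ/∂x₂^λ(x_λ)| ≥ ε^λ λ! M_λ M_λ / 4^λ` for all such `λ`. -/
theorem FGamma_lower_estimate (M : ℕ → ℝ) (hMpos : ∀ k, 0 < M k) (hMmono : Monotone M)
    (hM0 : M 0 = 1) (hMlc : LogConvexSeq M)
    (hMder : ∃ B : ℝ, ∀ k : ℕ, (M (k + 1) / M k) ^ ((k : ℝ)⁻¹) ≤ B)
    (hMan : Tendsto (fun k : ℕ => M k ^ ((k : ℝ)⁻¹)) atTop atTop) :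
    ∃ B > (0 : ℝ), ∀ E : ℝ → ℝ,
      (∀ r : ℝ, 0 ≤ r → 0 ≤ E r ∧ E r < 1) → StrictMonoOn E (Set.Ici 0) →
      ContinuousOn E (Set.Ici 0) → E 0 = 0 →
      Tendsto (fun r => E r / r) (𝓝[>] (0 : ℝ)) atTop →
      ∀ Λ : Set ℕ, (∀ l ∈ Λ, Even l ∧ 0 < l) → (∀ n : ℕ, ∃ l ∈ Λ, n < l) →
      (∀ l ∈ Λ, 1 < E (rhoSeq M l) / rhoSeq M l) →
      ∀ lam0 ∈ Λ,
      (∀ l ∈ Λ, lam0 ≤ l →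
        B * (M l ^ ((l : ℝ)⁻¹))⁻¹ ≤
          Metric.infDist (E (rhoSeq M l)) ((fun l' => E (rhoSeq M l')) '' (Λ \ {l}))) →
      Tendsto (fun n : ℕ => ((E (rhoSeq M n), (0 : ℝ)) : ℝ × ℝ)) atTop (𝓝 (0, 0)) ∧
      ∃ ε > (0 : ℝ), ∀ l ∈ Λ, lam0 ≤ l →
        ε ^ l * (Nat.factorial l) * M l * M l / 4 ^ l ≤
          |pd (0, l) (FGamma M E Λ) (E (rhoSeq M l), 0)| := by
  obtain ⟨hsm, hbd, hvd⟩ := baseH_props hMpos hMmono hMan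
  obtain ⟨B₀, hB₀⟩ := hMder
  have hρ : ∀ n, 0 < rhoSeq M n := fun n => div_pos (hMpos _) (hMpos _)
  have hρinv : ∀ n, (rhoSeq M n)⁻¹ = M (n + 1) / M n := fun n => inv_div _ _
  have hρ1 : ∀ n, 1 ≤ (rhoSeq M n)⁻¹ := fun n => by
    rw [hρinv]; exact one_le_ratio hMpos hMmono n
  have hφ : ∀ n, 0 < ostrowski M (rhoSeq M n)⁻¹ := fun n =>
    ostrowski_pos_s18 hMpos hMan (inv_pos.mpr (hρ n))
  refine ⟨1, one_pos, ?_⟩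
  intro E hE01 hEmono hEcont hE0 hElim Λ hΛ hΛinf hq lam0 hlam0 hδ
  constructor
  · have h1 : Tendsto (rhoSeq M) atTop (𝓝[Set.Ici 0] 0) := by
      refine tendsto_nhdsWithin_iff.mpr ⟨?_, Filter.Eventually.of_forall fun n => (hρ n).le⟩
      have := (ratio_tendsto hMpos hM0 hMlc hMan).inv_tendsto_atTop
      refine this.congr fun n => ?_
      rw [Pi.inv_apply, ← hρinv, inv_inv]
    have h2 := (hEcont 0 (Set.mem_Ici.mpr le_rfl)).tendsto.comp h1
    rw [hE0] at h2
    exact h2.prodMk_nhds tendsto_const_nhds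
  set c : ℕ → ℝ := Set.indicator Λ fun l => 1 / (ostrowski M (rhoSeq M l)⁻¹ * 2 ^ l) with hc
  have hc0 : ∀ l, 0 ≤ c l := fun l =>
    Set.indicator_nonneg (fun l _ => by have := hφ l; positivity) l
  obtain ⟨hFsm, -, hFvd⟩ := series_lemma (F := FGamma M E Λ) hsm hbd c
    (fun l => (rhoSeq M l)⁻¹) (fun l => (rhoSeq M l)⁻¹)
    (fun l => -(E (rhoSeq M l) / rhoSeq M l)) (fun l => (rhoSeq M l)⁻¹) hc0
    (fun l => (abs_of_nonneg (by linarith [hρ1 l])).le)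
    (fun l => (abs_of_nonneg (by linarith [hρ1 l])).le)
    (fun n => by
      have hg : Summable fun l : ℕ => M n * ((1 / 2 : ℝ) ^ l) :=
        (summable_geometric_of_lt_one (by norm_num) (by norm_num)).mul_left _
      refine Summable.of_nonneg_of_le (fun l => ?_) (fun l => ?_) hg
      · have := hc0 l
        have := hρ l
        positivity
      · have h1 := pow_div_ostrowski_le_s18 hMpos hMan (inv_pos.mpr (hρ l)) n
        have h2 : (rhoSeq M l)⁻¹ ^ n ≤ (rhoSeq M l)⁻¹ ^ (n + 2) :=
          pow_le_pow_right₀ (hρ1 l) (Nat.le_add_right n 2)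
        have h3 : c l ≤ 1 / (ostrowski M (rhoSeq M l)⁻¹ * 2 ^ l) :=
          Set.indicator_le_self' (fun l _ => by have := hφ l; positivity) l
        have h4 := hφ l
        have h5 := hρ l
        calc c l * (rhoSeq M l)⁻¹ ^ n
            ≤ 1 / (ostrowski M (rhoSeq M l)⁻¹ * 2 ^ l) * (rhoSeq M l)⁻¹ ^ (n + 2) := by gcongr
          _ = (rhoSeq M l)⁻¹ ^ (n + 2) / ostrowski M (rhoSeq M l)⁻¹ * (1 / 2) ^ l := by
              rw [one_div_pow]; field_simp
          _ ≤ _ := by gcongr)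
    (fun x => by
      unfold FGamma
      refine tsum_congr fun l => ?_
      by_cases hl : l ∈ Λ
      · simp only [hc, Set.indicator_of_mem hl, blockF]
        rw [div_eq_inv_mul x.1, div_eq_inv_mul x.2, sub_eq_add_neg]
        ring
      · simp [hc, Set.indicator_of_notMem hl])
  -- The scale loss `m_l² ≤ (C²)^l` is absorbed into `ε`.
  set C : ℝ := max B₀ 1 with hC
  have hC0 : 0 < C := lt_of_lt_of_le one_pos (le_max_right _ _)
  refine ⟨(C ^ 2)⁻¹, by positivity, ?_⟩
  intro l hl _
  obtain ⟨⟨j, hj⟩, hlpos⟩ := hΛ l hl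
  have hj2 : l = 2 * j := by omega
  have hjpos : 0 < j := by omega
  have hmC : M (l + 1) / M l ≤ C ^ l := by
    have h0 : 0 < M (l + 1) / M l := div_pos (hMpos _) (hMpos _)
    calc M (l + 1) / M l = ((M (l + 1) / M l) ^ ((l : ℝ)⁻¹)) ^ l :=
          (Real.rpow_inv_natCast_pow h0.le hlpos.ne').symm
      _ ≤ C ^ l := by
          have := (hB₀ l).trans (le_max_left B₀ 1)
          gcongr
  rw [pd_eq_vderiv hFsm]
  have hs := (hFvd l (E (rhoSeq M l), 0)).mul_left ((-1) ^ j)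
  simp only [mul_zero] at hs
  have hle := le_hasSum hs l fun k _ => by
    have h1 := baseH_vderiv_nonneg hMpos hMmono hMan j
      ((rhoSeq M k)⁻¹ * E (rhoSeq M l) + -(E (rhoSeq M k) / rhoSeq M k))
    rw [← hj2] at h1
    have h2 := hc0 k
    have h3 := hρ k
    have h4 : 0 ≤ c k * (rhoSeq M k)⁻¹ ^ l := by positivity
    calc (0 : ℝ) ≤ _ := mul_nonneg h4 h1
      _ = _ := by ring
  have hcl : c l = 1 / (ostrowski M (rhoSeq M l)⁻¹ * 2 ^ l) := Set.indicator_of_mem hl _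
  have hz : (rhoSeq M l)⁻¹ * E (rhoSeq M l) + -(E (rhoSeq M l) / rhoSeq M l) = 0 := by
    rw [div_eq_inv_mul]; ring
  rw [hz, hcl] at hle
  have hlow := baseH_vderiv_lower hMpos hMmono hMlc hMan j hjpos
  rw [← hj2] at hlow
  have habs : (-1) ^ j * vderiv l (FGamma M E Λ) (E (rhoSeq M l), 0)
      ≤ |vderiv l (FGamma M E Λ) (E (rhoSeq M l), 0)| := by
    refine (le_abs_self _).trans (le_of_eq ?_)
    rw [abs_mul, abs_pow, abs_neg, abs_one, one_pow, one_mul]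
  refine le_trans ?_ (hle.trans habs)
  set m := (rhoSeq M l)⁻¹ with hm
  have hm0 : 0 < m := inv_pos.mpr (hρ l)
  have hopt := le_pow_div_ostrowski hMpos hMlc hMan l
  rw [← hρinv, ← hm] at hopt hmC
  have hφl : 0 < ostrowski M m := hφ l
  have hMl := hMpos l
  have hεm : (C ^ 2)⁻¹ ^ l ≤ (m ^ 2)⁻¹ := by
    rw [inv_pow, ← pow_mul, mul_comm 2 l, pow_mul]
    gcongr
  calc (C ^ 2)⁻¹ ^ l * l.factorial * M l * M l / 4 ^ l
      ≤ (m ^ 2)⁻¹ * l.factorial * M l * (m ^ (l + 2) / ostrowski M m) / 4 ^ l := by gcongr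
    _ = 1 / (ostrowski M m * 2 ^ l) * m ^ l * (l.factorial * M l / 2 ^ l) := by
        rw [show (4 : ℝ) = 2 * 2 by norm_num, mul_pow, pow_add]
        field_simp
    _ ≤ 1 / (ostrowski M m * 2 ^ l) * m ^ l * ((-1) ^ j * vderiv l (baseH M) (0, 0)) := by
        gcongr
    _ = _ := by ring
end
end
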